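/- At every point of Ω, the scalar curvature of a Hessian metric satisfies R = |γ|² − |α|², where |γ|² = Σ_{i,i',j,j',k,k'} g^{ii'}g^{jj'}g^{kk'}γ_{ijk}γ_{i'j'k'} and |α|² = Σ_{i,j} g^{ij}α_iα_j. -/

import Mathlib

/-!
Write `g` for the metric and `∂_k g_{ab} = 2 γ_{kab}`. Differentiating `g⁻¹ g = 1` gives
`∂_k g^{ip} = -2 Σ_q Γ^i_{kq} g^{qp}`, hence
`∂_k Γ^i_{lj} = -2 Σ_r Γ^i_{kr} Γ^r_{lj} + Σ_p g^{ip} ∂_k γ_{plj}`.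
The fourth-order term is symmetric in `k` and `l`, so it drops out of the curvature, which becomes
purely quadratic: `R^i_{jkl} = Σ_r (Γ^i_{lr} Γ^r_{kj} - Γ^i_{kr} Γ^r_{lj})`.
Tracing twice, the first product contracts to `|γ|²` by total symmetry of `γ`, and the second
contracts to `|α|²` because `Σ_s Γ^s_{sr} = α_r` and `Σ_{j,k} g^{jk} Γ^r_{kj} = Σ_q g^{rq} α_q`.
-/

noncomputable section

/-- Partial derivative in the `i`-th coordinate direction. -/
def pd {n : ℕ} (i : Fin n) (f : (Fin n → ℝ) → ℝ) : (Fin n → ℝ) → ℝ :=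
  fun x => fderiv ℝ f x (Pi.single i 1)

variable {n : ℕ}

/-- The Hessian metric `g_{ij} = ∂_i ∂_j φ`. -/
def gmet (φ : (Fin n → ℝ) → ℝ) (x : Fin n → ℝ) : Matrix (Fin n) (Fin n) ℝ :=
  fun i j => pd i (pd j φ) x

/-- The inverse metric `g^{ij}`. -/
def gi (φ : (Fin n → ℝ) → ℝ) (x : Fin n → ℝ) : Matrix (Fin n) (Fin n) ℝ :=
  (gmet φ x)⁻¹

/-- The lowered difference tensor `γ_{ijk} = (1/2) ∂_i∂_j∂_k φ`. -/
def gam (φ : (Fin n → ℝ) → ℝ) (i j k : Fin n) : (Fin n → ℝ) → ℝ :=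
  fun x => (1 / 2) * pd i (pd j (pd k φ)) x

/-- The Christoffel symbols `Γ^i_{jk} = Σ_p g^{ip} γ_{pjk}`. -/
def Chr (φ : (Fin n → ℝ) → ℝ) (i j k : Fin n) : (Fin n → ℝ) → ℝ :=
  fun x => ∑ p, gi φ x i p * gam φ p j k x

/-- The first Koszul form `α_i = Σ_{r,p} g^{rp} γ_{pri}`. -/
def alph (φ : (Fin n → ℝ) → ℝ) (i : Fin n) : (Fin n → ℝ) → ℝ :=
  fun x => ∑ r, ∑ p, gi φ x r p * gam φ p r i x

/-- The second Koszul form `β_{ij} = ∂_i α_j`. -/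
def bet (φ : (Fin n → ℝ) → ℝ) (i j : Fin n) : (Fin n → ℝ) → ℝ :=
  pd i (alph φ j)

/-- Covariant derivative of the first Koszul form `∇_i α_j`. -/
def covAlpha (φ : (Fin n → ℝ) → ℝ) (i j : Fin n) : (Fin n → ℝ) → ℝ :=
  fun x => bet φ i j x - ∑ r, Chr φ r i j x * alph φ r x

/-- Covariant derivative of a covector field `∇_i X_j`. -/
def covCo (φ : (Fin n → ℝ) → ℝ) (X : Fin n → (Fin n → ℝ) → ℝ) (i j : Fin n) :
    (Fin n → ℝ) → ℝ :=
  fun x => pd i (X j) x - ∑ r, Chr φ r i j x * X r x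

/-- The Hessian `∇_i∇_j f` of a function. -/
def covHess (φ f : (Fin n → ℝ) → ℝ) (i j : Fin n) : (Fin n → ℝ) → ℝ :=
  fun x => pd i (pd j f) x - ∑ r, Chr φ r i j x * pd r f x

/-- Covariant derivative of the difference tensor `∇_i γ_{jkl}`. -/
def covGam (φ : (Fin n → ℝ) → ℝ) (i j k l : Fin n) : (Fin n → ℝ) → ℝ :=
  fun x => pd i (gam φ j k l) x -
    ∑ r, (Chr φ r i j x * gam φ r k l x + Chr φ r i k x * gam φ j r l x +
      Chr φ r i l x * gam φ j k r x)

/-- Second covariant derivative of the first Koszul form `∇_i∇_j α_k`. -/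
def cov2Alpha (φ : (Fin n → ℝ) → ℝ) (i j k : Fin n) : (Fin n → ℝ) → ℝ :=
  fun x => pd i (covAlpha φ j k) x -
    ∑ r, (Chr φ r i j x * covAlpha φ r k x + Chr φ r i k x * covAlpha φ j r x)

/-- The curvature tensor `R^i_{jkl}`. -/
def Riem (φ : (Fin n → ℝ) → ℝ) (i j k l : Fin n) : (Fin n → ℝ) → ℝ :=
  fun x => pd k (Chr φ i l j) x - pd l (Chr φ i k j) x +
    ∑ r, (Chr φ i k r x * Chr φ r l j x - Chr φ i l r x * Chr φ r k j x)

/-- The Ricci tensor `R_{jk} = Σ_s R^s_{jsk}`. -/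
def Ricci (φ : (Fin n → ℝ) → ℝ) (j k : Fin n) : (Fin n → ℝ) → ℝ :=
  fun x => ∑ s, Riem φ s j s k x

/-- The scalar curvature `R = Σ g^{jk} R_{jk}`. -/
def Scal (φ : (Fin n → ℝ) → ℝ) : (Fin n → ℝ) → ℝ :=
  fun x => ∑ j, ∑ k, gi φ x j k * Ricci φ j k x

/-- The Laplace–Beltrami operator of `g`. -/
def lap (φ u : (Fin n → ℝ) → ℝ) : (Fin n → ℝ) → ℝ :=
  fun x => ∑ i, ∑ j, gi φ x i j * (pd i (pd j u) x - ∑ k, Chr φ k i j x * pd k u x)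

/-- `|α|²`. -/
def normAlphaSq (φ : (Fin n → ℝ) → ℝ) : (Fin n → ℝ) → ℝ :=
  fun x => ∑ i, ∑ j, gi φ x i j * alph φ i x * alph φ j x

/-- `|γ|²`. -/
def normGamSq (φ : (Fin n → ℝ) → ℝ) : (Fin n → ℝ) → ℝ :=
  fun x => ∑ i, ∑ i', ∑ j, ∑ j', ∑ k, ∑ k',
    gi φ x i i' * gi φ x j j' * gi φ x k k' * gam φ i j k x * gam φ i' j' k' x

/-- `|∇γ|²`. -/
def normCovGamSq (φ : (Fin n → ℝ) → ℝ) : (Fin n → ℝ) → ℝ :=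
  fun x => ∑ i, ∑ i', ∑ j, ∑ j', ∑ k, ∑ k', ∑ l, ∑ l',
    gi φ x i i' * gi φ x j j' * gi φ x k k' * gi φ x l l' *
      covGam φ i j k l x * covGam φ i' j' k' l' x

/-- `|Rm|²` (the upper index is lowered with `g`). -/
def normRmSq (φ : (Fin n → ℝ) → ℝ) : (Fin n → ℝ) → ℝ :=
  fun x => ∑ i, ∑ i', ∑ j, ∑ j', ∑ k, ∑ k', ∑ l, ∑ l',
    gmet φ x i i' * gi φ x j j' * gi φ x k k' * gi φ x l l' *
      Riem φ i j k l x * Riem φ i' j' k' l' x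

/-- `|Ric|²`. -/
def normRicSq (φ : (Fin n → ℝ) → ℝ) : (Fin n → ℝ) → ℝ :=
  fun x => ∑ j, ∑ j', ∑ k, ∑ k',
    gi φ x j j' * gi φ x k k' * Ricci φ j k x * Ricci φ j' k' x

/-- The full contraction `Σ R_{ij} β_{ij}`. -/
def ricBeta (φ : (Fin n → ℝ) → ℝ) : (Fin n → ℝ) → ℝ :=
  fun x => ∑ i, ∑ i', ∑ j, ∑ j',
    gi φ x i i' * gi φ x j j' * Ricci φ i j x * bet φ i' j' x

/-- The full contraction `Σ R_{ij} ∇_i α_j`. -/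
def ricCovAlpha (φ : (Fin n → ℝ) → ℝ) : (Fin n → ℝ) → ℝ :=
  fun x => ∑ i, ∑ i', ∑ j, ∑ j',
    gi φ x i i' * gi φ x j j' * Ricci φ i j x * covAlpha φ i' j' x

/-- The full contraction `Σ (∇_i∇_j α_k) γ_{ijk}`. -/
def cov2AlphaGam (φ : (Fin n → ℝ) → ℝ) : (Fin n → ℝ) → ℝ :=
  fun x => ∑ i, ∑ i', ∑ j, ∑ j', ∑ k, ∑ k',
    gi φ x i i' * gi φ x j j' * gi φ x k k' * cov2Alpha φ i j k x * gam φ i' j' k' x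

variable {n : ℕ}

theorem contDiff_pd {f : (Fin n → ℝ) → ℝ} (hf : ContDiff ℝ (⊤ : ℕ∞) f) (i : Fin n) :
    ContDiff ℝ (⊤ : ℕ∞) (pd i f) := by
  have h : ContDiff ℝ (⊤ : ℕ∞) (fderiv ℝ f) := hf.fderiv_right (by simp)
  exact h.clm_apply contDiff_const

theorem pd_comm {f : (Fin n → ℝ) → ℝ} (hf : ContDiff ℝ (⊤ : ℕ∞) f) (i j : Fin n) :
    pd i (pd j f) = pd j (pd i f) := by
  funext x
  have hd : DifferentiableAt ℝ (fderiv ℝ f) x :=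
    ((hf.fderiv_right (m := (⊤ : ℕ∞)) (by simp)).differentiable (by simp)) x
  have key : ∀ a b : Fin n, pd a (pd b f) x
      = fderiv ℝ (fderiv ℝ f) x (Pi.single a 1) (Pi.single b 1) := by
    intro a b
    unfold pd
    rw [fderiv_clm_apply hd (differentiableAt_const _)]
    simp
  rw [key, key]
  exact (hf.contDiffAt.isSymmSndFDerivAt (by
    simpa using WithTop.coe_le_coe.mpr (le_top : (2 : ℕ∞) ≤ ⊤))).eq _ _

theorem pd_mul {f h : (Fin n → ℝ) → ℝ} {x : Fin n → ℝ} (hf : DifferentiableAt ℝ f x)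
    (hh : DifferentiableAt ℝ h x) (k : Fin n) :
    pd k (fun y => f y * h y) x = pd k f x * h x + f x * pd k h x := by
  unfold pd
  rw [fderiv_fun_mul hf hh]
  simp
  ring

theorem pd_sum {f : Fin n → (Fin n → ℝ) → ℝ} {x : Fin n → ℝ}
    (hf : ∀ p, DifferentiableAt ℝ (f p) x) (k : Fin n) :
    pd k (fun y => ∑ p, f p y) x = ∑ p, pd k (f p) x := by
  unfold pd
  rw [fderiv_fun_sum (fun p _ => hf p)]
  simp

theorem contDiff_gam {φ : (Fin n → ℝ) → ℝ} (hφ : ContDiff ℝ (⊤ : ℕ∞) φ) (i j k : Fin n) :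
    ContDiff ℝ (⊤ : ℕ∞) (gam φ i j k) :=
  contDiff_const.mul (contDiff_pd (contDiff_pd (contDiff_pd hφ k) j) i)

theorem gam_swap_left {φ : (Fin n → ℝ) → ℝ} (hφ : ContDiff ℝ (⊤ : ℕ∞) φ) (i j k : Fin n) :
    gam φ i j k = gam φ j i k := by
  unfold gam
  rw [pd_comm (contDiff_pd hφ k)]

theorem gam_swap_right {φ : (Fin n → ℝ) → ℝ} (hφ : ContDiff ℝ (⊤ : ℕ∞) φ) (i j k : Fin n) :
    gam φ i j k = gam φ i k j := by
  unfold gam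
  rw [pd_comm hφ j k]

theorem pd_gmet (φ : (Fin n → ℝ) → ℝ) (i j k : Fin n) (x : Fin n → ℝ) :
    pd k (fun y => gmet φ y i j) x = 2 * gam φ k i j x := by
  unfold gam gmet
  ring

/-- Symmetry of `∂_k γ_{plj}` in `k, l`, i.e. of the fourth derivatives of `φ`. -/
theorem pd_gam_swap {φ : (Fin n → ℝ) → ℝ} (hφ : ContDiff ℝ (⊤ : ℕ∞) φ) (k p l j : Fin n)
    (x : Fin n → ℝ) : pd k (gam φ p l j) x = pd l (gam φ p k j) x := by
  have key : ∀ a b : Fin n, pd a (gam φ b p j) x = (1 / 2) * pd a (pd b (pd p (pd j φ))) x := by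
    intro a b
    have hd : DifferentiableAt ℝ (pd b (pd p (pd j φ))) x :=
      (contDiff_pd (contDiff_pd (contDiff_pd hφ j) p) b).differentiable (by simp) x
    unfold gam
    rw [pd_mul (differentiableAt_const _) hd]
    simp [pd]
  rw [gam_swap_left hφ p l j, gam_swap_left hφ p k j, key, key,
    pd_comm (contDiff_pd (contDiff_pd hφ j) p)]

theorem gi_symm {φ : (Fin n → ℝ) → ℝ} (hφ : ContDiff ℝ (⊤ : ℕ∞) φ) (x : Fin n → ℝ)
    (i j : Fin n) : gi φ x i j = gi φ x j i := by
  have h : (gmet φ x).transpose = gmet φ x := by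
    ext a b
    exact congrFun (pd_comm hφ b a) x
  have h2 : (gi φ x).transpose = gi φ x := by
    unfold gi
    rw [Matrix.transpose_nonsing_inv, h]
  exact congrFun (congrFun h2 j) i

theorem differentiableAt_det {A : (Fin n → ℝ) → Matrix (Fin n) (Fin n) ℝ} {x : Fin n → ℝ}
    (hA : ∀ i j, DifferentiableAt ℝ (fun y => A y i j) x) :
    DifferentiableAt ℝ (fun y => (A y).det) x := by
  simp only [Matrix.det_apply']
  refine DifferentiableAt.fun_sum fun σ _ => ?_
  refine (differentiableAt_const _).mul ?_
  fun_prop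

theorem differentiable_gmet {φ : (Fin n → ℝ) → ℝ} (hφ : ContDiff ℝ (⊤ : ℕ∞) φ) (i j : Fin n) :
    Differentiable ℝ (fun y => gmet φ y i j) :=
  (contDiff_pd (contDiff_pd hφ j) i).differentiable (by simp)

/-- By Cramer's rule the entries of `g⁻¹` are quotients of determinants in the entries of `g`. -/
theorem differentiableAt_gi {φ : (Fin n → ℝ) → ℝ} (hφ : ContDiff ℝ (⊤ : ℕ∞) φ) {x : Fin n → ℝ}
    (hx : (gmet φ x).det ≠ 0) (i j : Fin n) : DifferentiableAt ℝ (fun y => gi φ y i j) x := by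
  have hg := fun a b => differentiable_gmet hφ a b x
  have hfun : (fun y => gi φ y i j)
      = fun y => (gmet φ y).det⁻¹ * ((gmet φ y).updateRow j (Pi.single i 1)).det := by
    funext y
    simp [gi, Matrix.inv_def, Matrix.adjugate_apply]
  rw [hfun]
  refine ((differentiableAt_det hg).inv hx).mul (differentiableAt_det fun a b => ?_)
  by_cases h : a = j
  · subst h
    simp
  · simpa [Matrix.updateRow_apply, h] using hg a b

/-- The derivative of the inverse metric, `∂_k g^{ip} = -2 Σ_q Γ^i_{kq} g^{qp}`. -/
theorem pd_gi {φ : (Fin n → ℝ) → ℝ} (hφ : ContDiff ℝ (⊤ : ℕ∞) φ) {x : Fin n → ℝ}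
    (hx : (gmet φ x).det ≠ 0) (k i p : Fin n) :
    pd k (fun y => gi φ y i p) x = -2 * ∑ q, Chr φ i k q x * gi φ x q p := by
  have hgi := fun a b => differentiableAt_gi hφ hx a b
  have hg := fun a b => differentiable_gmet hφ a b x
  -- `g⁻¹ g = 1` holds in a neighbourhood of `x`, so it may be differentiated at `x`.
  have hev : ∀ᶠ y in nhds x, (gmet φ y).det ≠ 0 :=
    (differentiableAt_det hg).continuousAt.eventually_ne hx
  have hprod : ∀ c, ∑ b, (pd k (fun y => gi φ y i b) x * gmet φ x b c
      + gi φ x i b * (2 * gam φ k b c x)) = 0 := by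
    intro c
    have h1 : (fun y => ∑ b, gi φ y i b * gmet φ y b c)
        =ᶠ[nhds x] fun _ => (1 : Matrix (Fin n) (Fin n) ℝ) i c := by
      filter_upwards [hev] with y hy
      rw [← Matrix.mul_apply, gi, Matrix.nonsing_inv_mul _ (isUnit_iff_ne_zero.mpr hy)]
    have h2 : pd k (fun y => ∑ b, gi φ y i b * gmet φ y b c) x = 0 := by
      unfold pd
      rw [h1.fderiv_eq]
      simp
    rw [pd_sum (f := fun b y => gi φ y i b * gmet φ y b c)
      (fun b => (hgi i b).mul (hg b c))] at h2
    rw [← h2]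
    refine Finset.sum_congr rfl fun b _ => ?_
    rw [pd_mul (hgi i b) (hg b c), pd_gmet]
  have hChr : ∀ c, ∑ b, pd k (fun y => gi φ y i b) x * gmet φ x b c = -2 * Chr φ i k c x := by
    intro c
    have h := hprod c
    rw [Finset.sum_add_distrib] at h
    rw [eq_neg_of_add_eq_zero_left h, Chr, Finset.mul_sum, ← Finset.sum_neg_distrib]
    refine Finset.sum_congr rfl fun b _ => ?_
    rw [gam_swap_left hφ k b c]
    ring
  have hinv : gmet φ x * gi φ x = 1 := Matrix.mul_nonsing_inv _ (isUnit_iff_ne_zero.mpr hx)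
  calc pd k (fun y => gi φ y i p) x
      = Matrix.vecMul (fun b => pd k (fun y => gi φ y i b) x) (gmet φ x * gi φ x) p := by
        rw [hinv, Matrix.vecMul_one]
    _ = ∑ q, (-2 * Chr φ i k q x) * gi φ x q p := by
        rw [← Matrix.vecMul_vecMul]
        simp only [Matrix.vecMul, dotProduct, hChr]
    _ = _ := by
        rw [Finset.mul_sum]
        exact Finset.sum_congr rfl fun q _ => by ring

theorem pd_Chr {φ : (Fin n → ℝ) → ℝ} (hφ : ContDiff ℝ (⊤ : ℕ∞) φ) {x : Fin n → ℝ}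
    (hx : (gmet φ x).det ≠ 0) (k i l j : Fin n) :
    pd k (Chr φ i l j) x = -2 * ∑ r, Chr φ i k r x * Chr φ r l j x
      + ∑ p, gi φ x i p * pd k (gam φ p l j) x := by
  have hgi := fun a b => differentiableAt_gi hφ hx a b
  have hgam := fun a b c => (contDiff_gam hφ a b c).differentiable (by simp) x
  have h1 : pd k (Chr φ i l j) x = ∑ p, (pd k (fun y => gi φ y i p) x * gam φ p l j x
      + gi φ x i p * pd k (gam φ p l j) x) := by
    unfold Chr
    rw [pd_sum (f := fun p y => gi φ y i p * gam φ p l j y)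
      fun p => (hgi i p).mul (hgam p l j)]
    exact Finset.sum_congr rfl fun p _ => pd_mul (hgi i p) (hgam p l j) k
  rw [h1, Finset.sum_add_distrib]
  congr 1
  simp only [pd_gi hφ hx, Chr, Finset.mul_sum, Finset.sum_mul]
  rw [Finset.sum_comm]
  refine Finset.sum_congr rfl fun q _ => Finset.sum_congr rfl fun p _ =>
    Finset.sum_congr rfl fun s _ => ?_
  ring

/-- The curvature of a Hessian metric is quadratic in the Christoffel symbols. -/
theorem Riem_eq {φ : (Fin n → ℝ) → ℝ} (hφ : ContDiff ℝ (⊤ : ℕ∞) φ) {x : Fin n → ℝ}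
    (hx : (gmet φ x).det ≠ 0) (i j k l : Fin n) :
    Riem φ i j k l x = ∑ r, Chr φ i l r x * Chr φ r k j x
      - ∑ r, Chr φ i k r x * Chr φ r l j x := by
  unfold Riem
  rw [pd_Chr hφ hx, pd_Chr hφ hx, Finset.sum_sub_distrib]
  simp only [pd_gam_swap hφ k _ l j]
  ring

/-- The contraction `g^{jk} Γ^s_{kr} Γ^r_{sj}` is `|γ|²`, by total symmetry of `γ`. -/
theorem trace_gam_part {φ : (Fin n → ℝ) → ℝ} (hφ : ContDiff ℝ (⊤ : ℕ∞) φ) (x : Fin n → ℝ) :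
    ∑ j, ∑ k, gi φ x j k * ∑ s, ∑ r, Chr φ s k r x * Chr φ r s j x = normGamSq φ x := by
  unfold normGamSq
  refine Finset.sum_congr rfl fun j _ => Finset.sum_congr rfl fun k _ => ?_
  rw [Finset.mul_sum]
  refine Finset.sum_congr rfl fun s _ => ?_
  have h : ∀ r, gi φ x j k * (Chr φ s k r x * Chr φ r s j x)
      = ∑ p, ∑ q, gi φ x j k * gi φ x s p * gi φ x q r * gam φ j s q x * gam φ k p r x := by
    intro r
    unfold Chr
    rw [Finset.sum_mul_sum, Finset.mul_sum]
    refine Finset.sum_congr rfl fun p _ => ?_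
    rw [Finset.mul_sum]
    refine Finset.sum_congr rfl fun q _ => ?_
    rw [gi_symm hφ x r q, gam_swap_left hφ p k r, gam_swap_right hφ q s j,
      gam_swap_left hφ q j s, gam_swap_right hφ j q s]
    ring
  rw [Finset.mul_sum, Finset.sum_congr rfl fun r _ => h r, Finset.sum_comm]
  refine Finset.sum_congr rfl fun p _ => ?_
  rw [Finset.sum_comm]

theorem trace_Chr (φ : (Fin n → ℝ) → ℝ) (r : Fin n) (x : Fin n → ℝ) :
    ∑ s, Chr φ s s r x = alph φ r x := rfl

theorem contract_Chr {φ : (Fin n → ℝ) → ℝ} (hφ : ContDiff ℝ (⊤ : ℕ∞) φ) (r : Fin n)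
    (x : Fin n → ℝ) :
    ∑ j, ∑ k, gi φ x j k * Chr φ r k j x = ∑ q, gi φ x r q * alph φ q x := by
  simp only [Chr, alph, Finset.mul_sum]
  rw [Finset.sum_congr rfl fun j _ => Finset.sum_comm, Finset.sum_comm]
  refine Finset.sum_congr rfl fun q _ => Finset.sum_congr rfl fun j _ =>
    Finset.sum_congr rfl fun k _ => ?_
  rw [gam_swap_left hφ q k j, gam_swap_right hφ k q j]
  ring

/-- The contraction `g^{jk} Γ^s_{sr} Γ^r_{kj}` is `|α|²`. -/
theorem trace_alph_part {φ : (Fin n → ℝ) → ℝ} (hφ : ContDiff ℝ (⊤ : ℕ∞) φ) (x : Fin n → ℝ) :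
    ∑ j, ∑ k, gi φ x j k * ∑ s, ∑ r, Chr φ s s r x * Chr φ r k j x = normAlphaSq φ x := by
  have h : ∀ j k, gi φ x j k * ∑ s, ∑ r, Chr φ s s r x * Chr φ r k j x
      = ∑ r, alph φ r x * (gi φ x j k * Chr φ r k j x) := by
    intro j k
    rw [Finset.sum_comm, Finset.mul_sum]
    refine Finset.sum_congr rfl fun r _ => ?_
    rw [← Finset.sum_mul, trace_Chr]
    ring
  simp only [h]
  rw [Finset.sum_congr rfl fun j _ => Finset.sum_comm, Finset.sum_comm]
  refine Finset.sum_congr rfl fun r _ => ?_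
  simp only [← Finset.mul_sum]
  rw [contract_Chr hφ, Finset.mul_sum]
  exact Finset.sum_congr rfl fun q _ => by ring

theorem scal_of_hessian_metric {n : ℕ} (hn : 1 ≤ n) (φ : (Fin n → ℝ) → ℝ)
    (hφ : ContDiff ℝ (⊤ : ℕ∞) φ) (Ω : Set (Fin n → ℝ)) (hΩ : IsOpen Ω)
    (hconn : IsConnected Ω) (hpos : ∀ x ∈ Ω, (gmet φ x).PosDef) :
    ∀ x ∈ Ω, Scal φ x = normGamSq φ x - normAlphaSq φ x := by
  intro x hx
  have hdet : (gmet φ x).det ≠ 0 := (hpos x hx).det_pos.ne'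
  rw [← trace_gam_part hφ, ← trace_alph_part hφ]
  simp only [Scal, Ricci, Riem_eq hφ hdet, Finset.sum_sub_distrib, mul_sub]

end
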